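/- Let Ω ⊆ ℂ be an open set containing 0, let g₁ : Ω → ℂ be holomorphic, and let k ≥ 1 be an integer. Define h : Ω∖{0} → ℝ by h(w) = |g₁(w)|² + k²·|w|^{2(k−1)}·(1 + |w|^{2k}·u(|w|^{2k})²), and let K denote the Gaussian curvature of the conformal metric h(w)|dw|² on Ω∖{0}. Then K(w) → −4 as w → 0 with w ∈ Ω∖{0}. -/

import Mathlib

open Complex Filter Topology Metric
open scoped ComplexOrder

/-- The function `u(t) = (t-1)/(t log t)` for `t ≠ 1`, extended by `u(1) = 1`. -/
noncomputable def u (t : ℝ) : ℝ := if t = 1 then 1 else (t - 1) / (t * Real.log t)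

/-- Wirtinger derivative `∂g` of a complex-valued function on `ℂ` (real-differentiable sense). -/
noncomputable def wdz (g : ℂ → ℂ) (z : ℂ) : ℂ :=
  (fderiv ℝ g z 1 - Complex.I * fderiv ℝ g z Complex.I) / 2

/-- Wirtinger derivative `∂̄g` of a complex-valued function on `ℂ`. -/
noncomputable def wdzbar (g : ℂ → ℂ) (z : ℂ) : ℂ :=
  (fderiv ℝ g z 1 + Complex.I * fderiv ℝ g z Complex.I) / 2

/-- `∂h` for a real-valued `h`. -/
noncomputable def wdzR (h : ℂ → ℝ) : ℂ → ℂ := wdz fun w => (h w : ℂ)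

/-- `∂̄h` for a real-valued `h`. -/
noncomputable def wdzbarR (h : ℂ → ℝ) : ℂ → ℂ := wdzbar fun w => (h w : ℂ)

/-- `∂∂̄h` for a real-valued `h`. -/
noncomputable def wlapR (h : ℂ → ℝ) : ℂ → ℂ := wdz (wdzbarR h)

/-- The numerator `h·∂∂̄h − ∂h·∂̄h` of (−1/2 times) the Gaussian curvature of `h|dz|²`. -/
noncomputable def curvNum (h : ℂ → ℝ) (z : ℂ) : ℂ :=
  (h z : ℂ) * wlapR h z - wdzR h z * wdzbarR h z

/-- The Gaussian curvature `K = −2(h·∂∂̄h − ∂h·∂̄h)/h³` of the conformal metric `h|dz|²`. -/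
noncomputable def gaussCurv (h : ℂ → ℝ) (z : ℂ) : ℂ :=
  -2 * curvNum h z / (h z : ℂ) ^ 3

/-!
Put `N = |w|²` and `σ = N (log N)²`. Since `k u(N^k) = (N^k - 1) / (N^k log N)`, the density is
`h = F / σ` with `F = σ (|g₁|² + k² N^(k-1)) + (N^k - 1)²`, a perturbation of the Poincaré metric
`|dw|² / σ` of the punctured disc, whose curvature is `-4`. For any positive `F`,
`K(F / σ) = -2 (σ (F ∂∂̄F - ∂F ∂̄F) + 2 F²) / F³`, so it suffices that `F → 1` while the derivatives
of `F` in the Poincaré metric tend to `0`. Functions with such a limit are closed under sums and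
products; they include `σ` itself, with limit `0`, and every `f` that is `C²` at the origin, with
limit `f 0`.
-/

open ComplexConjugate

section Wirtinger

variable {f g : ℂ → ℂ} {z : ℂ}

theorem wdz_add (hf : DifferentiableAt ℝ f z) (hg : DifferentiableAt ℝ g z) :
    wdz (fun w => f w + g w) z = wdz f z + wdz g z := by
  simp only [wdz, fderiv_fun_add hf hg, add_apply]
  ring

theorem wdz_mul (hf : DifferentiableAt ℝ f z) (hg : DifferentiableAt ℝ g z) :
    wdz (fun w => f w * g w) z = f z * wdz g z + g z * wdz f z := by
  simp only [wdz, fderiv_fun_mul hf hg, add_apply, smul_apply, smul_eq_mul]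
  ring

theorem wdz_conj (g : ℂ → ℂ) (z : ℂ) : wdz (fun w => conj (g w)) z = conj (wdzbar g z) := by
  have h : fderiv ℝ (fun w => conj (g w)) z = conjCLE.toContinuousLinearMap.comp (fderiv ℝ g z) :=
    conjCLE.comp_fderiv
  simp [wdz, wdzbar, h, sub_eq_add_neg, map_ofNat]

theorem wdz_eq_deriv (hf : DifferentiableAt ℂ f z) : wdz f z = deriv f z := by
  have h := (hf.hasDerivAt.hasFDerivAt.restrictScalars ℝ).fderiv
  simp only [wdz, h, ContinuousLinearMap.coe_restrictScalars',
    ContinuousLinearMap.toSpanSingleton_apply, smul_eq_mul]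
  linear_combination -(deriv f z / 2) * I_sq

theorem wdzbar_eq_zero (hf : DifferentiableAt ℂ f z) : wdzbar f z = 0 := by
  have h := (hf.hasDerivAt.hasFDerivAt.restrictScalars ℝ).fderiv
  simp only [wdzbar, h, ContinuousLinearMap.coe_restrictScalars',
    ContinuousLinearMap.toSpanSingleton_apply, smul_eq_mul]
  linear_combination (deriv f z / 2) * I_sq

theorem wdz_congr (h : f =ᶠ[𝓝 z] g) : wdz f z = wdz g z := by
  simp only [wdz, h.fderiv_eq]

theorem contDiffAt_wdz {m n : WithTop ℕ∞} (hf : ContDiffAt ℝ n f z) (hmn : m + 1 ≤ n) :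
    ContDiffAt ℝ m (wdz f) z := by
  have h := hf.fderiv_right hmn
  unfold wdz
  fun_prop

end Wirtinger

section RealWirtinger

variable {f g : ℂ → ℝ} {z : ℂ}

theorem wdzbarR_eq_conj_wdzR (f : ℂ → ℝ) (z : ℂ) : wdzbarR f z = conj (wdzR f z) := by
  have h := wdz_conj (fun w => (f w : ℂ)) z
  simp only [conj_ofReal] at h
  rw [wdzR, h, conj_conj, wdzbarR]

theorem differentiableAt_ofReal_comp (hf : DifferentiableAt ℝ f z) :
    DifferentiableAt ℝ (fun w => (f w : ℂ)) z :=
  ofRealCLM.differentiableAt.comp z hf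

theorem wdzR_eq_fderiv (hf : DifferentiableAt ℝ f z) :
    wdzR f z = (fderiv ℝ f z 1 - I * fderiv ℝ f z I) / 2 := by
  have h : fderiv ℝ (fun w => (f w : ℂ)) z = ofRealCLM.comp (fderiv ℝ f z) :=
    (ofRealCLM.hasFDerivAt.comp z hf.hasFDerivAt).fderiv
  simp [wdzR, wdz, h]

theorem contDiffAt_wdzR {m n : WithTop ℕ∞} (hf : ContDiffAt ℝ n f z) (hmn : m + 1 ≤ n) :
    ContDiffAt ℝ m (wdzR f) z :=
  contDiffAt_wdz (ofRealCLM.contDiff.contDiffAt.comp z hf) hmn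

theorem contDiffAt_wdzbarR {m n : WithTop ℕ∞} (hf : ContDiffAt ℝ n f z) (hmn : m + 1 ≤ n) :
    ContDiffAt ℝ m (wdzbarR f) z := by
  rw [funext (wdzbarR_eq_conj_wdzR f)]
  exact conjCLE.contDiff.contDiffAt.comp z (contDiffAt_wdzR hf hmn)

theorem contDiffAt_wlapR {m n : WithTop ℕ∞} (hf : ContDiffAt ℝ n f z) (hmn : m + 1 + 1 ≤ n) :
    ContDiffAt ℝ m (wlapR f) z :=
  contDiffAt_wdz (contDiffAt_wdzbarR hf hmn) le_rfl

theorem differentiableAt_wdzbarR (hf : ContDiffAt ℝ 2 f z) : DifferentiableAt ℝ (wdzbarR f) z :=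
  (contDiffAt_wdzbarR hf one_add_one_eq_two.le).differentiableAt one_ne_zero

theorem wdzR_add (hf : DifferentiableAt ℝ f z) (hg : DifferentiableAt ℝ g z) :
    wdzR (fun w => f w + g w) z = wdzR f z + wdzR g z := by
  simpa only [wdzR, ofReal_add] using
    wdz_add (differentiableAt_ofReal_comp hf) (differentiableAt_ofReal_comp hg)

theorem wdzR_mul (hf : DifferentiableAt ℝ f z) (hg : DifferentiableAt ℝ g z) :
    wdzR (fun w => f w * g w) z = f z * wdzR g z + g z * wdzR f z := by
  simpa only [wdzR, ofReal_mul] using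
    wdz_mul (differentiableAt_ofReal_comp hf) (differentiableAt_ofReal_comp hg)

theorem wdzR_log (hf : DifferentiableAt ℝ f z) (h0 : f z ≠ 0) :
    wdzR (fun w => Real.log (f w)) z = wdzR f z / f z := by
  rw [wdzR_eq_fderiv hf, wdzR_eq_fderiv (hf.log h0), fderiv.log hf h0]
  simp only [smul_apply, smul_eq_mul, ofReal_mul, ofReal_inv]
  ring

theorem wlapR_add (hf : ContDiffAt ℝ 2 f z) (hg : ContDiffAt ℝ 2 g z) :
    wlapR (fun w => f w + g w) z = wlapR f z + wlapR g z := by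
  have h : wdzbarR (fun w => f w + g w) =ᶠ[𝓝 z] fun w => wdzbarR f w + wdzbarR g w := by
    filter_upwards [hf.eventually (by simp), hg.eventually (by simp)] with w hfw hgw
    simp only [wdzbarR_eq_conj_wdzR, map_add,
      wdzR_add (hfw.differentiableAt two_ne_zero) (hgw.differentiableAt two_ne_zero)]
  rw [wlapR, wdz_congr h, wdz_add (differentiableAt_wdzbarR hf) (differentiableAt_wdzbarR hg),
    wlapR, wlapR]

theorem wlapR_mul (hf : ContDiffAt ℝ 2 f z) (hg : ContDiffAt ℝ 2 g z) :
    wlapR (fun w => f w * g w) z = f z * wlapR g z + g z * wlapR f z +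
      (wdzR f z * wdzbarR g z + wdzR g z * wdzbarR f z) := by
  have h : wdzbarR (fun w => f w * g w) =ᶠ[𝓝 z]
      fun w => f w * wdzbarR g w + g w * wdzbarR f w := by
    filter_upwards [hf.eventually (by simp), hg.eventually (by simp)] with w hfw hgw
    simp only [wdzbarR_eq_conj_wdzR, map_add, map_mul, conj_ofReal,
      wdzR_mul (hfw.differentiableAt two_ne_zero) (hgw.differentiableAt two_ne_zero)]
  have hf' := differentiableAt_ofReal_comp (hf.differentiableAt two_ne_zero)
  have hg' := differentiableAt_ofReal_comp (hg.differentiableAt two_ne_zero)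
  have hdf := differentiableAt_wdzbarR hf
  have hdg := differentiableAt_wdzbarR hg
  have hfdg : DifferentiableAt ℝ (fun w => f w * wdzbarR g w) z := hf'.mul hdg
  have hgdf : DifferentiableAt ℝ (fun w => g w * wdzbarR f w) z := hg'.mul hdf
  rw [wlapR, wdz_congr h, wdz_add hfdg hgdf, wdz_mul hf' hdg, wdz_mul hg' hdf]
  simp only [wlapR, wdzR]
  ring

end RealWirtinger

section Curvature

variable {f g : ℂ → ℝ} {z : ℂ}

theorem wdzR_congr (h : f =ᶠ[𝓝 z] g) : wdzR f z = wdzR g z :=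
  wdz_congr (h.fun_comp ofReal)

theorem wlapR_congr (h : f =ᶠ[𝓝 z] g) : wlapR f z = wlapR g z := by
  refine wdz_congr (h.eventuallyEq_nhds.mono fun w hw => ?_)
  rw [wdzbarR_eq_conj_wdzR, wdzbarR_eq_conj_wdzR, wdzR_congr hw]

theorem curvNum_congr (h : f =ᶠ[𝓝 z] g) : curvNum f z = curvNum g z := by
  simp only [curvNum, wdzbarR_eq_conj_wdzR, wdzR_congr h, wlapR_congr h, h.eq_of_nhds]

theorem gaussCurv_congr (h : f =ᶠ[𝓝 z] g) : gaussCurv f z = gaussCurv g z := by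
  simp only [gaussCurv, curvNum_congr h, h.eq_of_nhds]

-- `curvNum f = f² ∂∂̄ log f`, and the logarithm turns products into sums.
theorem curvNum_mul (hf : ContDiffAt ℝ 2 f z) (hg : ContDiffAt ℝ 2 g z) :
    curvNum (fun w => f w * g w) z = f z ^ 2 * curvNum g z + g z ^ 2 * curvNum f z := by
  simp only [curvNum, wdzbarR_eq_conj_wdzR, wlapR_mul hf hg,
    wdzR_mul (hf.differentiableAt two_ne_zero) (hg.differentiableAt two_ne_zero),
    map_add, map_mul, conj_ofReal, ofReal_mul]
  ring

theorem curvNum_div (hf : ContDiffAt ℝ 2 f z) (hg : ContDiffAt ℝ 2 g z) (h0 : g z ≠ 0) :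
    curvNum (fun w => f w / g w) z =
      (g z ^ 2 * curvNum f z - f z ^ 2 * curvNum g z) / g z ^ 4 := by
  have h : (fun w => f w / g w * g w) =ᶠ[𝓝 z] f := by
    filter_upwards [hg.continuousAt.eventually_ne h0] with w hw using div_mul_cancel₀ _ hw
  have hdiv : ContDiffAt ℝ 2 (fun w => f w / g w) z := hf.div hg h0
  have key := curvNum_mul hdiv hg
  rw [curvNum_congr h, ofReal_div] at key
  have h0' : (g z : ℂ) ≠ 0 := ofReal_ne_zero.2 h0
  rw [key]
  field_simp
  ring

theorem gaussCurv_eventuallyEq_nhdsNE (h : f =ᶠ[𝓝[≠] z] g) :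
    gaussCurv f =ᶠ[𝓝[≠] z] gaussCurv g := by
  filter_upwards [eventually_eventually_nhdsWithin.2 h, self_mem_nhdsWithin] with w hw hwz
  rw [isOpen_compl_singleton.nhdsWithin_eq hwz] at hw
  exact gaussCurv_congr hw

end Curvature

section CuspWeight

variable {z : ℂ}

theorem contDiff_normSq {n : WithTop ℕ∞} : ContDiff ℝ n (fun z : ℂ => normSq z) := by
  simpa only [normSq_eq_norm_sq] using contDiff_norm_sq ℝ

theorem contDiffAt_log_normSq {n : WithTop ℕ∞} (hz : z ≠ 0) :
    ContDiffAt ℝ n (fun w => Real.log (normSq w)) z :=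
  contDiff_normSq.contDiffAt.log (normSq_pos.2 hz).ne'

theorem wdzR_normSq (z : ℂ) : wdzR (fun w => normSq w) z = conj z := by
  have h : (fun w : ℂ => (normSq w : ℂ)) = fun w => w * conj w := funext fun w => (mul_conj w).symm
  have hconj : DifferentiableAt ℝ (fun w : ℂ => conj w) z := conjCLE.differentiableAt
  rw [wdzR, h, wdz_mul differentiableAt_fun_id hconj, wdz_conj,
    wdzbar_eq_zero differentiableAt_fun_id, wdz_eq_deriv differentiableAt_fun_id, deriv_id'']
  simp

theorem wlapR_normSq (z : ℂ) : wlapR (fun w => normSq w) z = 1 := by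
  have h : wdzbarR (fun w => normSq w) = fun w => w :=
    funext fun w => by rw [wdzbarR_eq_conj_wdzR, wdzR_normSq, conj_conj]
  rw [wlapR, h, wdz_eq_deriv differentiableAt_fun_id, deriv_id'']

theorem wdzR_log_normSq (hz : z ≠ 0) : wdzR (fun w => Real.log (normSq w)) z = z⁻¹ := by
  have hn : normSq z ≠ 0 := (normSq_pos.2 hz).ne'
  rw [wdzR_log (contDiff_normSq.differentiable one_ne_zero z) hn, wdzR_normSq, inv_def,
    ofReal_inv, div_eq_mul_inv]

theorem wlapR_log_normSq (hz : z ≠ 0) : wlapR (fun w => Real.log (normSq w)) z = 0 := by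
  have h : wdzbarR (fun w => Real.log (normSq w)) =ᶠ[𝓝 z] fun w => conj (w⁻¹) := by
    filter_upwards [isOpen_ne.mem_nhds hz] with w hw
    rw [wdzbarR_eq_conj_wdzR, wdzR_log_normSq hw]
  rw [wlapR, wdz_congr h, wdz_conj, wdzbar_eq_zero (differentiableAt_inv hz), map_zero]

/-- The weight `|z|² (log |z|²)²`, whose inverse is the density of the complete metric of curvature
`-4` (the Poincaré metric) on the punctured unit disc. -/
noncomputable def cuspWeight (z : ℂ) : ℝ := normSq z * Real.log (normSq z) ^ 2

theorem cuspWeight_eq_mul_conj (z : ℂ) : (cuspWeight z : ℂ) =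
    (z * Real.log (normSq z)) * conj (z * Real.log (normSq z)) := by
  simp only [cuspWeight, ofReal_mul, ofReal_pow, ← mul_conj, map_mul, conj_ofReal]
  ring

theorem contDiffAt_cuspWeight {n : WithTop ℕ∞} (hz : z ≠ 0) : ContDiffAt ℝ n cuspWeight z :=
  contDiff_normSq.contDiffAt.mul ((contDiffAt_log_normSq hz).pow 2)

theorem wdzR_log_normSq_sq (hz : z ≠ 0) :
    wdzR (fun w => Real.log (normSq w) ^ 2) z = 2 * Real.log (normSq z) * z⁻¹ := by
  have hL : DifferentiableAt ℝ (fun w => Real.log (normSq w)) z :=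
    (contDiffAt_log_normSq hz).differentiableAt one_ne_zero
  simp only [pow_two, wdzR_mul hL hL, wdzR_log_normSq hz]
  ring

theorem wlapR_log_normSq_sq (hz : z ≠ 0) :
    wlapR (fun w => Real.log (normSq w) ^ 2) z = 2 / normSq z := by
  have hL := contDiffAt_log_normSq (n := 2) hz
  simp only [pow_two, wlapR_mul hL hL, wlapR_log_normSq hz, wdzbarR_eq_conj_wdzR,
    wdzR_log_normSq hz, map_inv₀, ← mul_conj]
  field_simp
  ring

theorem wdzR_cuspWeight (hz : z ≠ 0) : wdzR cuspWeight z =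
    conj z * (Real.log (normSq z) ^ 2 + 2 * Real.log (normSq z)) := by
  have hN : DifferentiableAt ℝ (fun w : ℂ => normSq w) z :=
    contDiff_normSq.differentiable one_ne_zero z
  have hL : DifferentiableAt ℝ (fun w => Real.log (normSq w) ^ 2) z :=
    ((contDiffAt_log_normSq hz).pow 2).differentiableAt one_ne_zero
  unfold cuspWeight
  rw [wdzR_mul hN hL, wdzR_normSq, wdzR_log_normSq_sq hz, ← mul_conj, ofReal_pow]
  field_simp
  ring

theorem wlapR_cuspWeight (hz : z ≠ 0) : wlapR cuspWeight z =
    (Real.log (normSq z) ^ 2 + 4 * Real.log (normSq z) + 2 : ℝ) := by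
  have hc : conj z ≠ 0 := (map_ne_zero conj).2 hz
  unfold cuspWeight
  rw [wlapR_mul contDiff_normSq.contDiffAt ((contDiffAt_log_normSq hz).pow 2), wlapR_normSq,
    wlapR_log_normSq_sq hz, wdzbarR_eq_conj_wdzR, wdzbarR_eq_conj_wdzR, wdzR_normSq,
    wdzR_log_normSq_sq hz, ← mul_conj]
  push_cast
  simp only [map_mul, map_inv₀, conj_ofReal, conj_conj, map_ofNat]
  field_simp
  ring

theorem curvNum_cuspWeight (hz : z ≠ 0) : curvNum cuspWeight z = -2 * cuspWeight z := by
  rw [curvNum, wdzbarR_eq_conj_wdzR, wlapR_cuspWeight hz, wdzR_cuspWeight hz, cuspWeight]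
  push_cast
  simp only [map_mul, map_add, map_pow, conj_ofReal, conj_conj, map_ofNat, ← mul_conj]
  ring

theorem gaussCurv_div_cuspWeight {F : ℂ → ℝ} (hF : ContDiffAt ℝ 2 F z)
    (hσ : cuspWeight z ≠ 0) : gaussCurv (fun w => F w / cuspWeight w) z =
      -2 * (cuspWeight z * curvNum F z + 2 * F z ^ 2) / F z ^ 3 := by
  have hz : z ≠ 0 := normSq_eq_zero.not.1 (left_ne_zero_of_mul hσ)
  have hσ' : (cuspWeight z : ℂ) ≠ 0 := ofReal_ne_zero.2 hσ
  rw [gaussCurv, curvNum_div hF (contDiffAt_cuspWeight hz) hσ, curvNum_cuspWeight hz, ofReal_div]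
  field_simp
  ring

theorem eventually_normSq_mem_Ioo : ∀ᶠ z : ℂ in 𝓝[≠] 0, normSq z ∈ Set.Ioo 0 1 := by
  have h : ∀ᶠ z : ℂ in 𝓝[≠] 0, normSq z < 1 :=
    (continuous_normSq.tendsto' 0 0 normSq_zero).mono_left nhdsWithin_le_nhds
      |>.eventually_lt_const one_pos
  filter_upwards [h, self_mem_nhdsWithin] with z h1 hz using ⟨normSq_pos.2 hz, h1⟩

theorem cuspWeight_ne_zero (hz : normSq z ∈ Set.Ioo 0 1) : cuspWeight z ≠ 0 :=
  mul_ne_zero hz.1.ne' (pow_ne_zero 2 (Real.log_neg hz.1 hz.2).ne)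

theorem tendsto_mul_log_pow_nhdsGT_zero (n : ℕ) :
    Tendsto (fun x : ℝ => x * Real.log x ^ n) (𝓝[>] 0) (𝓝 0) := by
  have h := ((Real.isLittleO_pow_log_id_atTop (n := n)).tendsto_div_nhds_zero.comp
    tendsto_inv_nhdsGT_zero).const_mul ((-1) ^ n)
  rw [mul_zero] at h
  refine h.congr fun x => ?_
  rw [Function.comp_apply, Real.log_inv, id, div_inv_eq_mul, ← mul_assoc, ← mul_pow, neg_one_mul,
    neg_neg, mul_comm]

theorem tendsto_normSq_mul_log_pow (n : ℕ) :
    Tendsto (fun z : ℂ => normSq z * Real.log (normSq z) ^ n) (𝓝[≠] 0) (𝓝 0) := by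
  have h : Tendsto (fun z : ℂ => normSq z) (𝓝[≠] 0) (𝓝[>] 0) :=
    tendsto_nhdsWithin_iff.2
      ⟨(continuous_normSq.tendsto' 0 0 normSq_zero).mono_left nhdsWithin_le_nhds,
        eventually_mem_nhdsWithin.mono fun _ => normSq_pos.2⟩
  exact (tendsto_mul_log_pow_nhdsGT_zero n).comp h

theorem tendsto_mul_log_normSq :
    Tendsto (fun z : ℂ => z * Real.log (normSq z)) (𝓝[≠] 0) (𝓝 0) := by
  rw [tendsto_zero_iff_norm_tendsto_zero]
  refine (Real.continuous_sqrt.tendsto' 0 0 Real.sqrt_zero).comp (tendsto_normSq_mul_log_pow 2)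
    |>.congr fun z => ?_
  rw [Function.comp_apply, norm_def, normSq_mul, normSq_ofReal, pow_two]

end CuspWeight

/-- Convergence of `f` to `c` at the puncture `0`, to second order with respect to the Poincaré
metric of the punctured disc: `f → c`, while `∂f` and `∂∂̄f`, measured in that metric, tend to `0`.
As `f` is real-valued, `∂̄f` is the conjugate of `∂f` and needs no condition of its own. -/
structure HasCuspLimit (f : ℂ → ℝ) (c : ℝ) : Prop where
  eventually_contDiffAt : ∀ᶠ z in 𝓝[≠] 0, ContDiffAt ℝ 2 f z
  tendsto : Tendsto f (𝓝[≠] 0) (𝓝 c)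
  tendsto_wdzR : Tendsto (fun z => z * Real.log (normSq z) * wdzR f z) (𝓝[≠] 0) (𝓝 0)
  tendsto_wlapR : Tendsto (fun z => cuspWeight z * wlapR f z) (𝓝[≠] 0) (𝓝 0)

namespace HasCuspLimit

variable {f g : ℂ → ℝ} {a b : ℝ}

theorem tendsto_ofReal (hf : HasCuspLimit f a) :
    Tendsto (fun z => (f z : ℂ)) (𝓝[≠] 0) (𝓝 a) :=
  (continuous_ofReal.tendsto a).comp hf.tendsto

theorem tendsto_cuspWeight_mul_wdzR_mul_wdzbarR (hf : HasCuspLimit f a) (hg : HasCuspLimit g b) :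
    Tendsto (fun z => cuspWeight z * (wdzR f z * wdzbarR g z)) (𝓝[≠] 0) (𝓝 0) := by
  have h := hf.tendsto_wdzR.mul ((continuous_conj.tendsto 0).comp hg.tendsto_wdzR)
  rw [zero_mul] at h
  refine h.congr fun z => ?_
  rw [Function.comp_apply, cuspWeight_eq_mul_conj, wdzbarR_eq_conj_wdzR, map_mul conj _ (wdzR g z)]
  ring

theorem add (hf : HasCuspLimit f a) (hg : HasCuspLimit g b) :
    HasCuspLimit (fun z => f z + g z) (a + b) where
  eventually_contDiffAt := by
    filter_upwards [hf.eventually_contDiffAt, hg.eventually_contDiffAt] with z hfz hgz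
      using hfz.add hgz
  tendsto := hf.tendsto.add hg.tendsto
  tendsto_wdzR := by
    have h := hf.tendsto_wdzR.add hg.tendsto_wdzR
    rw [add_zero] at h
    refine h.congr' ?_
    filter_upwards [hf.eventually_contDiffAt, hg.eventually_contDiffAt] with z hfz hgz
    rw [wdzR_add (hfz.differentiableAt two_ne_zero) (hgz.differentiableAt two_ne_zero), mul_add]
  tendsto_wlapR := by
    have h := hf.tendsto_wlapR.add hg.tendsto_wlapR
    rw [add_zero] at h
    refine h.congr' ?_
    filter_upwards [hf.eventually_contDiffAt, hg.eventually_contDiffAt] with z hfz hgz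
    rw [wlapR_add hfz hgz, mul_add]

theorem mul (hf : HasCuspLimit f a) (hg : HasCuspLimit g b) :
    HasCuspLimit (fun z => f z * g z) (a * b) where
  eventually_contDiffAt := by
    filter_upwards [hf.eventually_contDiffAt, hg.eventually_contDiffAt] with z hfz hgz
      using hfz.mul hgz
  tendsto := hf.tendsto.mul hg.tendsto
  tendsto_wdzR := by
    have h := (hf.tendsto_ofReal.mul hg.tendsto_wdzR).add (hg.tendsto_ofReal.mul hf.tendsto_wdzR)
    simp only [mul_zero, add_zero] at h
    refine h.congr' ?_
    filter_upwards [hf.eventually_contDiffAt, hg.eventually_contDiffAt] with z hfz hgz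
    rw [wdzR_mul (hfz.differentiableAt two_ne_zero) (hgz.differentiableAt two_ne_zero)]
    ring
  tendsto_wlapR := by
    have h := ((hf.tendsto_ofReal.mul hg.tendsto_wlapR).add
      (hg.tendsto_ofReal.mul hf.tendsto_wlapR)).add
      ((hf.tendsto_cuspWeight_mul_wdzR_mul_wdzbarR hg).add
        (hg.tendsto_cuspWeight_mul_wdzR_mul_wdzbarR hf))
    simp only [mul_zero, add_zero] at h
    refine h.congr' ?_
    filter_upwards [hf.eventually_contDiffAt, hg.eventually_contDiffAt] with z hfz hgz
    rw [wlapR_mul hfz hgz]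
    ring

theorem tendsto_cuspWeight_mul_curvNum (hf : HasCuspLimit f a) :
    Tendsto (fun z => cuspWeight z * curvNum f z) (𝓝[≠] 0) (𝓝 0) := by
  have h := (hf.tendsto_ofReal.mul hf.tendsto_wlapR).sub
    (hf.tendsto_cuspWeight_mul_wdzR_mul_wdzbarR hf)
  rw [mul_zero, sub_zero] at h
  refine h.congr fun z => ?_
  rw [curvNum]
  ring

theorem tendsto_gaussCurv_div_cuspWeight (hf : HasCuspLimit f a) (ha : a ≠ 0) :
    Tendsto (gaussCurv fun z => f z / cuspWeight z) (𝓝[≠] 0) (𝓝 (-4 / a)) := by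
  have ha' : (a : ℂ) ≠ 0 := ofReal_ne_zero.2 ha
  have h := ((hf.tendsto_cuspWeight_mul_curvNum.add
    ((hf.tendsto_ofReal.pow 2).const_mul 2)).const_mul (-2)).div (hf.tendsto_ofReal.pow 3)
    (pow_ne_zero 3 ha')
  rw [show -2 * (0 + 2 * (a : ℂ) ^ 2) / a ^ 3 = -4 / a by field_simp; ring] at h
  refine h.congr' ?_
  filter_upwards [hf.eventually_contDiffAt, eventually_normSq_mem_Ioo] with z hfz hz
  exact (gaussCurv_div_cuspWeight hfz (cuspWeight_ne_zero hz)).symm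

end HasCuspLimit

theorem hasCuspLimit_of_contDiffAt {f : ℂ → ℝ} (hf : ContDiffAt ℝ 2 f 0) :
    HasCuspLimit f (f 0) where
  eventually_contDiffAt := (hf.eventually (by simp)).filter_mono nhdsWithin_le_nhds
  tendsto := hf.continuousAt.tendsto.mono_left nhdsWithin_le_nhds
  tendsto_wdzR := by
    have h : ContinuousAt (wdzR f) 0 := (contDiffAt_wdzR (m := 1) hf (by norm_num)).continuousAt
    simpa only [zero_mul] using
      tendsto_mul_log_normSq.mul (h.tendsto.mono_left nhdsWithin_le_nhds)
  tendsto_wlapR := by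
    have h : ContinuousAt (wlapR f) 0 := (contDiffAt_wlapR (m := 0) hf (by norm_num)).continuousAt
    have hσ : Tendsto (fun z => (cuspWeight z : ℂ)) (𝓝[≠] 0) (𝓝 0) :=
      (continuous_ofReal.tendsto' 0 0 ofReal_zero).comp (tendsto_normSq_mul_log_pow 2)
    simpa only [zero_mul] using hσ.mul (h.tendsto.mono_left nhdsWithin_le_nhds)

theorem hasCuspLimit_cuspWeight : HasCuspLimit cuspWeight 0 where
  eventually_contDiffAt := eventually_mem_nhdsWithin.mono fun _ => contDiffAt_cuspWeight
  tendsto := tendsto_normSq_mul_log_pow 2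
  tendsto_wdzR := by
    have h := (tendsto_normSq_mul_log_pow 3).add ((tendsto_normSq_mul_log_pow 2).const_mul 2)
    rw [mul_zero, add_zero] at h
    refine ((continuous_ofReal.tendsto' 0 0 ofReal_zero).comp h).congr' ?_
    filter_upwards [self_mem_nhdsWithin] with z hz
    rw [wdzR_cuspWeight hz, Function.comp_apply]
    push_cast
    rw [← mul_conj]
    ring
  tendsto_wlapR := by
    have h := ((tendsto_normSq_mul_log_pow 4).add ((tendsto_normSq_mul_log_pow 3).const_mul 4)).add
      ((tendsto_normSq_mul_log_pow 2).const_mul 2)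
    simp only [mul_zero, add_zero] at h
    refine ((continuous_ofReal.tendsto' 0 0 ofReal_zero).comp h).congr' ?_
    filter_upwards [self_mem_nhdsWithin] with z hz
    rw [wlapR_cuspWeight hz, Function.comp_apply, cuspWeight, ← ofReal_mul]
    ring_nf

theorem sq_mul_pow_mul_u_sq {k : ℕ} (hk : k ≠ 0) {t : ℝ} (ht0 : 0 < t) (ht1 : t ≠ 1) :
    (k : ℝ) ^ 2 * t ^ (k - 1) * (t ^ k * u (t ^ k) ^ 2) =
      (t ^ k - 1) ^ 2 / (t * Real.log t ^ 2) := by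
  have hkR : (k : ℝ) ≠ 0 := Nat.cast_ne_zero.2 hk
  have hlog : Real.log t ≠ 0 := Real.log_ne_zero_of_pos_of_ne_one ht0 ht1
  have hpow : t ^ k = t ^ (k - 1) * t := (pow_sub_one_mul hk t).symm
  have hne : t ^ k ≠ 1 := mt (pow_eq_one_iff_of_nonneg ht0.le hk).1 ht1
  rw [u, if_neg hne, Real.log_pow, hpow]
  field_simp

theorem hasCuspLimit_cuspWeight_mul_add {p q : ℂ → ℝ} (hp : ContDiffAt ℝ 2 p 0)
    (hq : ContDiffAt ℝ 2 q 0) :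
    HasCuspLimit (fun z => cuspWeight z * p z + q z) (q 0) := by
  simpa only [zero_mul, zero_add] using
    (hasCuspLimit_cuspWeight.mul (hasCuspLimit_of_contDiffAt hp)).add
      (hasCuspLimit_of_contDiffAt hq)

theorem density_eq_div_cuspWeight {k : ℕ} (hk : k ≠ 0) (a : ℝ) {z : ℂ}
    (hz : normSq z ∈ Set.Ioo 0 1) :
    a + (k : ℝ) ^ 2 * ‖z‖ ^ (2 * (k - 1)) * (1 + ‖z‖ ^ (2 * k) * u (‖z‖ ^ (2 * k)) ^ 2) =
      (cuspWeight z * (a + (k : ℝ) ^ 2 * normSq z ^ (k - 1)) + (normSq z ^ k - 1) ^ 2) /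
        cuspWeight z := by
  simp only [pow_mul, ← normSq_eq_norm_sq]
  rw [add_div, mul_div_cancel_left₀ _ (cuspWeight_ne_zero hz), cuspWeight,
    ← sq_mul_pow_mul_u_sq hk hz.1 hz.2.ne]
  ring

theorem stmt14_general {p : ℂ → ℝ} (hp : ContDiffAt ℝ 2 p 0) {k : ℕ} (hk : 1 ≤ k) :
    Tendsto (gaussCurv fun w =>
        p w + (k : ℝ) ^ 2 * ‖w‖ ^ (2 * (k - 1)) *
          (1 + ‖w‖ ^ (2 * k) * u (‖w‖ ^ (2 * k)) ^ 2))
      (𝓝[≠] 0) (𝓝 (-4)) := by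
  have hk0 : k ≠ 0 := Nat.one_le_iff_ne_zero.1 hk
  have hN : ContDiffAt ℝ 2 (fun z : ℂ => normSq z) 0 := contDiff_normSq.contDiffAt
  have hF := hasCuspLimit_cuspWeight_mul_add
    (hp.add ((contDiffAt_const (c := (k : ℝ) ^ 2)).mul (hN.pow (k - 1))))
    (((hN.pow k).sub (contDiffAt_const (c := (1 : ℝ)))).pow 2)
  have hlim := hF.tendsto_gaussCurv_div_cuspWeight (by simp [hk0])
  simp only [normSq_zero, zero_pow hk0, zero_sub, neg_one_sq, ofReal_one, div_one] at hlim
  refine hlim.congr' (gaussCurv_eventuallyEq_nhdsNE ?_)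
  filter_upwards [eventually_normSq_mem_Ioo] with z hz
    using (density_eq_div_cuspWeight hk0 (p z) hz).symm

/-- for holomorphic `g₁` on an open `Ω ∋ 0` and
`h(w) = |g₁(w)|² + h_k(w)`, the Gaussian curvature of `h|dw|²` tends to `−4`
as `w → 0` within `Ω∖{0}`. -/
theorem stmt14 (Ω : Set ℂ) (hΩ : IsOpen Ω) (h0Ω : (0 : ℂ) ∈ Ω)
    (g₁ : ℂ → ℂ) (hg₁ : DifferentiableOn ℂ g₁ Ω)
    (k : ℕ) (hk : 1 ≤ k) :
    Tendsto (gaussCurv (fun w =>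
        ‖g₁ w‖ ^ 2 +
          (k : ℝ) ^ 2 * ‖w‖ ^ (2 * (k - 1)) *
            (1 + ‖w‖ ^ (2 * k) * u (‖w‖ ^ (2 * k)) ^ 2)))
      (𝓝[Ω \ {0}] (0 : ℂ)) (𝓝 (-4)) := by
  have hg : ContDiffAt ℝ 2 g₁ 0 :=
    ((hg₁.contDiffOn hΩ).contDiffAt (hΩ.mem_nhds h0Ω)).restrict_scalars ℝ
  exact (stmt14_general (hg.norm_sq ℝ) hk).mono_left (nhdsWithin_mono 0 fun _ hz => hz.2)
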